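/- Let (R, 𝔪) be a regular local ring containing a field. Let 𝔭, 𝔮 be prime ideals of R such that √(𝔭 + 𝔮) = 𝔪 and dim R/𝔭 + dim R/𝔮 = dim R. Then for all positive integers a and b, 𝔭^{(a)} ∩ 𝔮^{(b)} ⊆ 𝔪^{a+b}. -/

import Mathlib

/-- The `n`-th symbolic power of a prime ideal `P`:
`P^{(n)} = P^n R_P ∩ R`, the preimage in `R` of `P^n R_P` under the localization map. -/
noncomputable def symbolicPower {R : Type*} [CommRing R] (P : Ideal R) [P.IsPrime] (n : ℕ) :
    Ideal R :=
  (Ideal.map (algebraMap R (Localization.AtPrime P)) (P ^ n)).comap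
    (algebraMap R (Localization.AtPrime P))

/-- A (Noetherian) local ring is regular if its maximal ideal can be generated
by `dim R` elements. -/
def IsRegularLocal (R : Type*) [CommRing R] [IsLocalRing R] : Prop :=
  IsNoetherianRing R ∧
    ∃ s : Finset R, Ideal.span (s : Set R) = IsLocalRing.maximalIdeal R ∧
      (s.card : WithBot (WithTop ℕ)) = ringKrullDim R


namespace SymPow

open Polynomial in
lemma eval_eq_zero_of_insep {S A κ : Type*} [Field S] [CommRing A] [Field κ]
    (ψ : S →+* A) (φ : A →+* κ) (p : ℕ) [hp : Fact p.Prime] [CharP κ p] (c : A) (d : S)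
    (hc : c ^ p = ψ d) (h : ∀ b : S, φ (ψ b) ≠ φ c) (g : S[X])
    (hg : φ (g.eval₂ ψ c) = 0) : g.eval₂ ψ c = 0 := by
  have hirr : Irreducible (X ^ p - C d : S[X]) := by
    refine X_pow_sub_C_irreducible_of_prime hp.out ?_
    intro b hb
    apply h b
    apply frobenius_inj κ p
    simp only [frobenius_def]
    rw [← map_pow, ← map_pow, ← map_pow, hb, hc]
  by_cases hd : (X ^ p - C d : S[X]) ∣ g
  · obtain ⟨q, rfl⟩ := hd
    rw [eval₂_mul]
    simp [hc]
  · obtain ⟨u, v, huv⟩ := (hirr.coprime_iff_not_dvd.mpr hd)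
    exfalso
    have := congrArg (fun f => φ (f.eval₂ ψ c)) huv
    simp [hc, hg] at this

theorem exists_section_charP {A κ : Type*} [CommRing A] [Field κ] (p : ℕ) [hp : Fact p.Prime]
    [CharP A p] [CharP κ p] (φ : A →+* κ) (hφ : Function.Surjective φ)
    (hI : ∀ x y, φ x = 0 → φ y = 0 → x * y = 0) : ∃ σ : κ →+* A, φ.comp σ = RingHom.id κ := by
  have hpow : ∀ x, φ x = 0 → x ^ p = 0 := by
    intro x hx
    have h2 : x ^ 2 = 0 := by rw [pow_two]; exact hI _ _ hx hx
    obtain ⟨k, hk⟩ := Nat.exists_eq_add_of_le hp.out.two_le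
    rw [hk, pow_add, h2, zero_mul]
  let F : Set (Subring A) := {S | (frobenius A p).range ≤ S ∧ ∀ x ∈ S, φ x = 0 → x = 0}
  have h0 : (frobenius A p).range ∈ F := by
    refine ⟨le_rfl, ?_⟩
    rintro _ ⟨a, rfl⟩ h
    rw [frobenius_def] at h ⊢
    rw [map_pow] at h
    exact hpow a (pow_eq_zero_iff hp.out.ne_zero |>.mp h)
  obtain ⟨S, hS0, hS⟩ := zorn_le_nonempty₀ F (by
    intro c hc hchain y hy
    refine ⟨sSup c, ⟨?_, ?_⟩, fun z hz => le_sSup hz⟩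
    · exact (hc hy).1.trans (le_sSup hy)
    · intro x hx h
      rw [Subring.mem_sSup_of_directedOn ⟨y, hy⟩ hchain.directedOn] at hx
      obtain ⟨s, hs, hxs⟩ := hx
      exact (hc hs).2 x hxs h) _ h0
  have hSF := hS.prop
  have hfrob : ∀ a : A, a ^ p ∈ S := fun a => hSF.1 ⟨a, rfl⟩
  have hfield : IsField S := by
    refine ⟨⟨0, 1, ?_⟩, mul_comm, ?_⟩
    · intro h
      have := congrArg (fun x : S => φ x) h
      simp at this
    · intro s hs
      have hs' : φ s ≠ 0 := fun h => hs (Subtype.ext (hSF.2 _ s.2 h))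
      obtain ⟨a, ha⟩ := hφ (φ s)⁻¹
      refine ⟨⟨s ^ (p - 1) * a ^ p, S.mul_mem (S.pow_mem s.2 _) (hfrob a)⟩, ?_⟩
      apply Subtype.ext
      have h1 : φ (s * a - 1) = 0 := by simp [ha, hs']
      have h2 := hpow _ h1
      rw [sub_pow_char, one_pow, sub_eq_zero, mul_pow] at h2
      simp only [Subring.coe_mul, Subring.coe_one]
      rw [← mul_assoc, ← pow_succ', Nat.sub_add_cancel hp.out.one_le, h2]
  have hsurj : Function.Surjective (φ.comp S.subtype) := by
    intro y
    obtain ⟨c, rfl⟩ := hφ y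
    by_contra hcon
    push Not at hcon
    let S' : Subring A := (Polynomial.eval₂RingHom S.subtype c).range
    have hle : S ≤ S' := by
      intro s hs
      exact ⟨Polynomial.C ⟨s, hs⟩, by simp⟩
    have hcS' : c ∈ S' := ⟨Polynomial.X, by simp⟩
    have hF' : S' ∈ F := by
      refine ⟨hSF.1.trans hle, ?_⟩
      rintro _ ⟨g, rfl⟩ h
      let _ : Field S := hfield.toField
      exact eval_eq_zero_of_insep S.subtype φ p c ⟨c ^ p, hfrob c⟩ rfl (fun b => hcon b) g h
    have := hS.eq_of_le hF' hle
    rw [← this] at hcS'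
    exact hcon ⟨c, hcS'⟩ rfl
  have hinj : Function.Injective (φ.comp S.subtype) := by
    rw [injective_iff_map_eq_zero]
    intro s hs
    exact Subtype.ext (hSF.2 _ s.2 hs)
  let e := RingEquiv.ofBijective (φ.comp S.subtype) ⟨hinj, hsurj⟩
  refine ⟨S.subtype.comp e.symm.toRingHom, ?_⟩
  ext y
  exact e.apply_symm_apply y

theorem exists_section_charZero {A κ : Type*} [CommRing A] [Field κ] [Algebra ℚ A]
    (φ : A →+* κ) (hφ : Function.Surjective φ)
    (hI : ∀ x y, φ x = 0 → φ y = 0 → x * y = 0) : ∃ σ : κ →+* A, φ.comp σ = RingHom.id κ := by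
  let _ : Algebra ℚ κ := (φ.comp (algebraMap ℚ A)).toAlgebra
  have : CharZero κ := algebraRat.charZero κ
  obtain ⟨s, hs⟩ := exists_isTranscendenceBasis ℚ κ
  have := hs.isAlgebraic_field
  have : Algebra.FormallySmooth ℚ κ := 
    Algebra.FormallySmooth.of_algebraicIndependent_of_isSeparable hs.1
  let φ' : A →ₐ[ℚ] κ := { φ with commutes' := fun r => rfl }
  have hnil : IsNilpotent (RingHom.ker φ') := by
    refine ⟨2, ?_⟩
    rw [pow_two, Ideal.zero_eq_bot, eq_bot_iff, Ideal.mul_le]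
    intro x hx y hy
    exact hI x y hx hy
  refine ⟨(Algebra.FormallySmooth.liftOfSurjective (AlgHom.id ℚ κ) φ' hφ hnil).toRingHom, ?_⟩
  ext y
  exact Algebra.FormallySmooth.liftOfSurjective_apply (AlgHom.id ℚ κ) φ' hφ hnil y

theorem exists_section {K A κ : Type*} [Field K] [CommRing A] [Field κ] (ι : K →+* A)
    (φ : A →+* κ) (hφ : Function.Surjective φ)
    (hI : ∀ x y, φ x = 0 → φ y = 0 → x * y = 0) : ∃ σ : κ →+* A, φ.comp σ = RingHom.id κ := by
  have : Nontrivial A := φ.domain_nontrivial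
  obtain ⟨p, hp⟩ := CharP.exists K
  rcases CharP.char_is_prime_or_zero K p with h | rfl
  · have : Fact p.Prime := ⟨h⟩
    have : CharP A p := charP_of_injective_ringHom ι.injective p
    have : CharP κ p := charP_of_injective_ringHom (φ.comp ι).injective p
    exact exists_section_charP p φ hφ hI
  · have : CharZero K := CharP.charP_to_charZero K
    let _ : Algebra ℚ A := (ι.comp (algebraMap ℚ K)).toAlgebra
    exact exists_section_charZero φ hφ hI

end SymPow

namespace SymPow
open IsLocalRing

/-- `σ` is a coefficient field of `R ⧸ 𝔪 ^ M`. -/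
def IsCoeff {R : Type*} [CommRing R] [IsLocalRing R] {M : ℕ}
    (σ : ResidueField R →+* R ⧸ maximalIdeal R ^ M) : Prop :=
  ∀ (c : ResidueField R) (r : R), σ c = Ideal.Quotient.mk _ r → residue R r = c

theorem exists_coeff_succ {K : Type*} {R : Type*} [Field K] [CommRing R] [IsLocalRing R]
    (ι : K →+* R) {M : ℕ} (hK : Subsingleton (K →+* R ⧸ maximalIdeal R ^ M)) (hM : 1 ≤ M)
    (σ : ResidueField R →+* R ⧸ maximalIdeal R ^ M) (hσ : IsCoeff σ) :
    ∃ σ' : ResidueField R →+* R ⧸ maximalIdeal R ^ (M + 1), IsCoeff σ' ∧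
      (Ideal.Quotient.factorPow (maximalIdeal R) (Nat.le_succ M)).comp σ' = σ := by
  set φ := Ideal.Quotient.factorPow (maximalIdeal R) (Nat.le_succ M) with hφ
  let A : Subring (ResidueField R × (R ⧸ maximalIdeal R ^ (M + 1))) :=
    RingHom.eqLocus (σ.comp (RingHom.fst _ _)) (φ.comp (RingHom.snd _ _))
  have hmemA : ∀ z : ResidueField R × (R ⧸ maximalIdeal R ^ (M + 1)), z ∈ A ↔ σ z.1 = φ z.2 :=
    fun z => Iff.rfl
  let ιA : K →+* A := (RingHom.prod ((residue R).comp ι) ((Ideal.Quotient.mk _).comp ι)).codRestrict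
    A (by
      intro k
      rw [hmemA]
      exact RingHom.congr_fun (hK.elim (σ.comp ((residue R).comp ι))
        (φ.comp ((Ideal.Quotient.mk _).comp ι))) k)
  let π : A →+* ResidueField R := (RingHom.fst _ _).comp A.subtype
  have hφs : Function.Surjective φ := Ideal.Quotient.factor_surjective _
  have hπ : Function.Surjective π := by
    intro c
    obtain ⟨a, ha⟩ := hφs (σ c)
    exact ⟨⟨(c, a), ha.symm⟩, rfl⟩
  obtain ⟨τ, hτ⟩ := exists_section ιA π hπ (by
    rintro ⟨⟨x1, x2⟩, hx⟩ ⟨⟨y1, y2⟩, hy⟩ h1 h2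
    have h1' : x1 = 0 := h1
    have h2' : y1 = 0 := h2
    subst h1' h2'
    rw [hmemA] at hx hy
    obtain ⟨x, rfl⟩ := Ideal.Quotient.mk_surjective x2
    obtain ⟨y, rfl⟩ := Ideal.Quotient.mk_surjective y2
    have hx' : x ∈ maximalIdeal R ^ M := by
      rw [← Ideal.Quotient.eq_zero_iff_mem]
      simpa [hφ] using hx.symm
    have hy' : y ∈ maximalIdeal R ^ M := by
      rw [← Ideal.Quotient.eq_zero_iff_mem]
      simpa [hφ] using hy.symm
    apply Subtype.ext
    simp only [Subring.coe_mul, Prod.mk_mul_mk, mul_zero, ZeroMemClass.coe_zero]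
    refine Prod.ext rfl ?_
    rw [← map_mul]
    refine Ideal.Quotient.eq_zero_iff_mem.mpr ?_
    refine Ideal.pow_le_pow_right (by omega : M + 1 ≤ M + M) ?_
    rw [pow_add]
    exact Ideal.mul_mem_mul hx' hy')
  have hτ1 : ∀ c, (τ c).1.1 = c := fun c => RingHom.congr_fun hτ c
  have hτ2 : ∀ c, φ (τ c).1.2 = σ c := fun c => by
    have := (hmemA _).mp (τ c).2
    rw [hτ1] at this
    exact this.symm
  refine ⟨(RingHom.snd _ _).comp (A.subtype.comp τ), ?_, ?_⟩
  · intro c r h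
    apply hσ
    rw [← hτ2]
    have h' : (τ c).1.2 = _ := h
    rw [h']
    simp [hφ]
  · ext1 c
    exact hτ2 c

theorem exists_coeff_extend {K : Type*} {R : Type*} [Field K] [CommRing R] [IsLocalRing R]
    (ι : K →+* R) (hK : ∀ M, Subsingleton (K →+* R ⧸ maximalIdeal R ^ M)) {M N : ℕ} (hM : 1 ≤ M)
    (hMN : M ≤ N)
    (σ : ResidueField R →+* R ⧸ maximalIdeal R ^ M) (hσ : IsCoeff σ) :
    ∃ σ' : ResidueField R →+* R ⧸ maximalIdeal R ^ N, IsCoeff σ' ∧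
      (Ideal.Quotient.factorPow (maximalIdeal R) hMN).comp σ' = σ := by
  induction N, hMN using Nat.le_induction with
  | base => 
    refine ⟨σ, hσ, ?_⟩
    ext1 c
    obtain ⟨r, hr⟩ := Ideal.Quotient.mk_surjective (σ c)
    simp [← hr]
  | succ N hN ih =>
    obtain ⟨σ₁, h₁, h₂⟩ := ih
    obtain ⟨σ₂, h₃, h₄⟩ := exists_coeff_succ ι (hK N) (hM.trans hN) σ₁ h₁
    refine ⟨σ₂, h₃, ?_⟩
    rw [← h₂, ← h₄]
    ext1 c
    obtain ⟨r, hr⟩ := Ideal.Quotient.mk_surjective (σ₂ c)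
    simp [← hr]

/-- Coefficient fields exist and extend. -/
theorem coeff_fields {K : Type*} {R : Type*} [Field K] [CommRing R] [IsLocalRing R]
    [Algebra K R] :
    (∀ N, 1 ≤ N → ∃ σ : ResidueField R →+* R ⧸ maximalIdeal R ^ N, IsCoeff σ) ∧
    (∀ (M N : ℕ) (_ : 1 ≤ M) (hMN : M ≤ N) (σ : ResidueField R →+* R ⧸ maximalIdeal R ^ M),
      IsCoeff σ → 
    ∃ σ' : ResidueField R →+* R ⧸ maximalIdeal R ^ N, IsCoeff σ' ∧
      (Ideal.Quotient.factorPow (maximalIdeal R) hMN).comp σ' = σ) := by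
  have h2 : (∀ (M N : ℕ) (_ : 1 ≤ M) (hMN : M ≤ N)
      (σ : ResidueField R →+* R ⧸ maximalIdeal R ^ M), IsCoeff σ → 
    ∃ σ' : ResidueField R →+* R ⧸ maximalIdeal R ^ N, IsCoeff σ' ∧
      (Ideal.Quotient.factorPow (maximalIdeal R) hMN).comp σ' = σ) := by
    obtain ⟨p, hp⟩ := CharP.exists K
    intro M N hM hMN σ hσ
    rcases CharP.char_is_prime_or_zero K p with h | rfl
    · have : Fact p.Prime := ⟨h⟩
      exact exists_coeff_extend ((algebraMap K R).comp (ZMod.castHom dvd_rfl K))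
        (fun M => inferInstance) hM hMN σ hσ
    · have : CharZero K := CharP.charP_to_charZero K
      exact exists_coeff_extend ((algebraMap K R).comp (algebraMap ℚ K))
        (fun M => inferInstance) hM hMN σ hσ
  refine ⟨?_, h2⟩
  intro N hN
  let σ : ResidueField R →+* R ⧸ maximalIdeal R ^ 1 :=
    Ideal.Quotient.factor (S := maximalIdeal R) (T := maximalIdeal R ^ 1) (by simp)
  have hσ : IsCoeff σ := by
    intro c r h
    obtain ⟨s, rfl⟩ := residue_surjective c
    have h' : (Ideal.Quotient.mk (maximalIdeal R ^ 1)) s = Ideal.Quotient.mk _ r := h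
    rw [Ideal.Quotient.eq, pow_one] at h'
    exact (Ideal.Quotient.eq.mpr h').symm
  obtain ⟨σ', h, -⟩ := h2 1 N le_rfl hN σ hσ
  exact ⟨σ', h⟩
end SymPow

namespace SymPow
open IsLocalRing

/-- Artin-Rees consequence. -/
theorem artinRees_colon {R : Type*} [CommRing R] [IsNoetherianRing R] (m P : Ideal R) [P.IsPrime]
    (x : R) (hx : x ∉ P) :
    ∃ c : ℕ, ∀ N y, x * y ∈ P ⊔ m ^ N → y ∈ P ⊔ m ^ (N - c) := by
  obtain ⟨c, hc⟩ := Ideal.exists_pow_inf_eq_pow_smul m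
    (Submodule.span R {(Ideal.Quotient.mk P x : R ⧸ P)})
  refine ⟨c, fun N y h => ?_⟩
  rcases lt_or_ge N c with hN | hN
  · simp [Nat.sub_eq_zero_of_le hN.le]
  obtain ⟨z, hz, w, hw, hzw⟩ := Submodule.mem_sup.mp h
  have hmem : (Ideal.Quotient.mk P (x * y)) ∈ m ^ N • (⊤ : Submodule R (R ⧸ P)) ⊓
      Submodule.span R {(Ideal.Quotient.mk P x : R ⧸ P)} := by
    constructor
    · rw [← hzw, map_add, Ideal.Quotient.eq_zero_iff_mem.mpr hz, zero_add]
      have : (Ideal.Quotient.mk P w) = w • (1 : R ⧸ P) := by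
        rw [Algebra.smul_def, mul_one]; rfl
      rw [this]
      exact Submodule.smul_mem_smul hw trivial
    · rw [mul_comm, map_mul]
      exact Submodule.mem_span_singleton.mpr ⟨y, by rw [Algebra.smul_def]; rfl⟩
  rw [hc N hN] at hmem
  have hmem2 : (Ideal.Quotient.mk P (x * y)) ∈
      m ^ (N - c) • Submodule.span R {(Ideal.Quotient.mk P x : R ⧸ P)} :=
    (show m ^ (N - c) • (m ^ c • ⊤ ⊓ Submodule.span R {(Ideal.Quotient.mk P x : R ⧸ P)}) ≤
      m ^ (N - c) • Submodule.span R {(Ideal.Quotient.mk P x : R ⧸ P)} from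
      Submodule.smul_mono le_rfl inf_le_right) hmem
  obtain ⟨a, ha, hax⟩ := Submodule.mem_smul_span_singleton.mp hmem2
  rw [Algebra.smul_def] at hax
  change Ideal.Quotient.mk P a * Ideal.Quotient.mk P x = _ at hax
  rw [← map_mul, Ideal.Quotient.eq] at hax
  have hxy : x * (y - a) ∈ P := by
    have := P.neg_mem hax
    convert this using 1
    ring
  have hya : y - a ∈ P := (‹P.IsPrime›.mem_or_mem hxy).resolve_left hx
  rw [← sub_add_cancel y a]
  exact add_mem (Ideal.mem_sup_left hya) (Ideal.mem_sup_right ha)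

theorem length_step {R : Type*} [CommRing R] (m P : Ideal R) (x : R) (c N : ℕ)
    (hc : ∀ y, x * y ∈ P ⊔ m ^ N → y ∈ P ⊔ m ^ (N - c)) :
    Module.length R (R ⧸ (P ⊔ m ^ (N - c))) + Module.length R (R ⧸ ((P ⊔ Ideal.span {x}) ⊔ m ^ N))
      ≤ Module.length R (R ⧸ (P ⊔ m ^ N)) := by
  set J := P ⊔ m ^ N
  let J' : Submodule R R := Submodule.comap (LinearMap.mulLeft R x) J
  let f : (R ⧸ J') →ₗ[R] (R ⧸ J) := Submodule.mapQ J' J (LinearMap.mulLeft R x) le_rfl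
  have hle : J ≤ (P ⊔ Ideal.span {x}) ⊔ m ^ N := sup_le_sup_right le_sup_left _
  let g : (R ⧸ J) →ₗ[R] (R ⧸ ((P ⊔ Ideal.span {x}) ⊔ m ^ N)) := Submodule.factor hle
  have hf : Function.Injective f := by
    rw [← LinearMap.ker_eq_bot, Submodule.ker_mapQ]
    rw [eq_bot_iff, Submodule.map_le_iff_le_comap]
    intro y hy
    simpa [J'] using hy
  have hfg : Function.Exact f g := by
    intro y
    obtain ⟨y, rfl⟩ := Submodule.mkQ_surjective _ y
    have h1 : g (J.mkQ y) = 0 ↔ y ∈ (P ⊔ Ideal.span {x}) ⊔ m ^ N := by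
      simp [g, Ideal.Quotient.eq_zero_iff_mem]
    rw [h1]
    constructor
    · intro h
      have h' : y ∈ J ⊔ Ideal.span {x} := by
        refine (le_of_eq ?_ : (P ⊔ Ideal.span {x}) ⊔ m ^ N ≤ J ⊔ Ideal.span {x}) h
        simp only [J]
        ac_rfl
      obtain ⟨j, hj, w, hw, rfl⟩ := Submodule.mem_sup.mp h'
      obtain ⟨r, rfl⟩ := Ideal.mem_span_singleton'.mp hw
      refine ⟨J'.mkQ r, ?_⟩
      simp only [f, Submodule.mkQ_apply, Submodule.mapQ_apply, LinearMap.mulLeft_apply]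
      rw [Submodule.Quotient.eq]
      have := J.neg_mem hj
      convert this using 1
      ring
    · rintro ⟨r, hr⟩
      obtain ⟨r, rfl⟩ := Submodule.mkQ_surjective _ r
      simp only [f, Submodule.mkQ_apply, Submodule.mapQ_apply, LinearMap.mulLeft_apply] at hr
      rw [Submodule.Quotient.eq] at hr
      have h2 : x * r ∈ (P ⊔ Ideal.span {x}) ⊔ m ^ N :=
        Ideal.mul_mem_right _ _ (Ideal.mem_sup_left (Ideal.mem_sup_right
          (Ideal.mem_span_singleton_self x)))
      have := sub_mem h2 (hle hr)
      simpa using this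
  rw [Module.length_eq_add_of_exact f g hf (Submodule.factor_surjective hle) hfg]
  gcongr
  exact Module.length_le_of_surjective (Submodule.factor (show J' ≤ P ⊔ m ^ (N - c) from
    fun y hy => hc y hy)) (Submodule.factor_surjective _)

theorem length_lower {R : Type*} [CommRing R] [IsNoetherianRing R] [IsLocalRing R] (d : ℕ) :
    ∀ (I : Ideal R) (s : LTSeries (PrimeSpectrum R)), s.length = d → I ≤ s.head.asIdeal →
    ∃ C : ℕ, ∀ t : ℕ, (t.choose d : ℕ∞) ≤
      Module.length R (R ⧸ (I ⊔ maximalIdeal R ^ (C * t + 1))) := by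
  induction d with
  | zero => 
    intro I s hs hI
    refine ⟨0, fun t => ?_⟩
    have hne : I ⊔ maximalIdeal R ^ (0 * t + 1) ≠ ⊤ := by
      have h1 : I ≤ maximalIdeal R := hI.trans (le_maximalIdeal s.head.isPrime.ne_top)
      have h2 : I ⊔ maximalIdeal R ^ (0 * t + 1) ≤ maximalIdeal R := by simp [h1]
      intro h
      rw [h, top_le_iff] at h2
      exact (maximalIdeal.isMaximal R).ne_top h2
    have : Nontrivial (R ⧸ (I ⊔ maximalIdeal R ^ (0 * t + 1))) :=
      Ideal.Quotient.nontrivial_iff.mpr hne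
    simp only [Nat.choose_zero_right, Nat.cast_one]
    exact Order.one_le_iff_pos.mpr Module.length_pos
  | succ d ih =>
    intro I s hs hI
    have hlt : s.head < s 1 := by
      have := s.step ⟨0, by omega⟩
      have h1 : (⟨0, by omega⟩ : Fin s.length).succ = 1 := by
        ext
        simp [Fin.val_one', Nat.mod_eq_of_lt (show 1 < s.length + 1 by omega)]
      rw [h1] at this
      exact this
    obtain ⟨x, hx1, hx0⟩ := SetLike.exists_of_lt (show s.head.asIdeal < (s 1).asIdeal from hlt)
    obtain ⟨c, hc⟩ := artinRees_colon (maximalIdeal R) s.head.asIdeal x hx0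
    obtain ⟨C', hC'⟩ := ih (s.head.asIdeal ⊔ Ideal.span {x}) (s.tail (by omega))
      (by simp [hs]) (by
        rw [RelSeries.head_tail]
        exact sup_le hlt.le (by simpa [Ideal.span_le] using hx1))
    have mono : ∀ (I J : Ideal R), I ≤ J → Module.length R (R ⧸ J) ≤ Module.length R (R ⧸ I) :=
      fun I J h => Module.length_le_of_surjective (Submodule.factor h) 
        (Submodule.factor_surjective h)
    refine ⟨max c C', fun t => ?_⟩
    refine le_trans ?_ (mono _ _ (sup_le_sup_right hI _))
    induction t with
    | zero => simp
    | succ t iht =>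
      refine le_trans ?_ (length_step (maximalIdeal R) s.head.asIdeal x c _ (hc _))
      rw [Nat.choose_succ_succ, Nat.cast_add, add_comm]
      refine add_le_add (iht.trans (mono _ _ (sup_le_sup_left (Ideal.pow_le_pow_right ?_) _))) ?_
      · have : c ≤ max c C' := le_max_left _ _
        rw [mul_add]
        omega
      · refine le_trans ?_ ((hC' (t+1)).trans 
          (mono _ _ (sup_le_sup_left (Ideal.pow_le_pow_right ?_) _)))
        · exact_mod_cast Nat.choose_le_choose d (Nat.le_succ t)
        · have : C' ≤ max c C' := le_max_right _ _
          gcongr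

theorem length_lower' {R : Type*} [CommRing R] [IsNoetherianRing R] [IsLocalRing R] (I : Ideal R)
    (d : ℕ) (hd : (d : WithBot ℕ∞) ≤ ringKrullDim (R ⧸ I)) :
    ∃ C : ℕ, ∀ t : ℕ, (t.choose d : ℕ∞) ≤
      Module.length R (R ⧸ (I ⊔ maximalIdeal R ^ (C * t + 1))) := by
  rw [ringKrullDim_quotient] at hd
  obtain ⟨s, hs⟩ := Order.le_krullDim_iff.mp hd
  refine length_lower d I (s.map (fun x => x.1) (fun _ _ h => h)) (by exact hs) ?_
  exact s.head.2
end SymPow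

namespace SymPow
open MvPolynomial

theorem span_range_pow {T k : Type*} [CommSemiring k] [CommRing T] [Algebra k T] {n : ℕ}
    (u : Fin n → T) (i : ℕ) :
    Ideal.span (Set.range u) ^ i = Ideal.span (Set.image (fun w => aeval u (monomial w (1 : k)))
      {w : Fin n →₀ ℕ | w.degree = i}) := by
  have h1 : Ideal.span (Set.range u) = (idealOfVars (Fin n) k).map (aeval (R := k) u) := by
    rw [idealOfVars, Ideal.map_span]
    congr 1
    ext t
    simp
  rw [h1, ← Ideal.map_pow, pow_idealOfVars_eq_span, Ideal.map_span, ← Set.image_comp]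
  rfl

theorem aeval_monomial_mem_pow {T k : Type*} [CommSemiring k] [CommRing T] [Algebra k T] {n : ℕ}
    (u : Fin n → T) (w : Fin n →₀ ℕ) (c : k) :
    aeval u (monomial w c) ∈ Ideal.span (Set.range u) ^ w.degree := by
  have : monomial w c = C c * monomial w 1 := by simp [C_mul_monomial]
  rw [this, map_mul]
  apply Ideal.mul_mem_left
  rw [span_range_pow (k := k)]
  exact Ideal.subset_span ⟨w, rfl, rfl⟩

/-- Indices of standard monomials. -/
noncomputable def stdIdx (n D L : ℕ) : Finset (Fin n → ℕ) :=
  Finset.univ.biUnion fun j => Fintype.piFinset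
    fun i => if i = j then Finset.range D else Finset.range L

theorem card_stdIdx (n D L : ℕ) : (stdIdx n D L).card ≤ n * (D * L ^ (n - 1)) := by
  refine Finset.card_biUnion_le.trans ?_
  have : ∀ j : Fin n, (Fintype.piFinset (fun i => if i = j then Finset.range D
      else Finset.range L)).card = D * L ^ (n - 1) := by
    intro j
    rw [Fintype.card_piFinset]
    rw [← Finset.mul_prod_erase _ _ (Finset.mem_univ j)]
    rw [Finset.prod_congr rfl (g := fun _ => L)]
    · simp
    · intro i hi
      simp [Finset.ne_of_mem_erase hi]
  simp [this]

theorem count_span {k T : Type*} [Field k] [CommRing T] [Algebra k T] {n L D : ℕ} (u : Fin n → T)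
    {J : Type*} [Fintype J] (v : J → T)
    (hV : ∀ t, ∃ w ∈ Submodule.span k (Set.range v), t - w ∈ Ideal.span (Set.range u))
    (hL : Ideal.span (Set.range u) ^ L = ⊥) (g : MvPolynomial (Fin n) k) (hg : g.IsHomogeneous D)
    (hg0 : g ≠ 0) (hgU : aeval u g ∈ Ideal.span (Set.range u) ^ (D + 1)) :
    Submodule.span k (Set.range fun z : J × stdIdx n D L =>
      v z.1 * aeval u (monomial (Finsupp.equivFunOnFinite.symm z.2.1) (1 : k))) = ⊤ := by
  set U := Ideal.span (Set.range u) with hU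
  set W := Submodule.span k (Set.range fun z : J × stdIdx n D L =>
      v z.1 * aeval u (monomial (Finsupp.equivFunOnFinite.symm z.2.1) (1 : k))) with hW
  let mo : MonomialOrder (Fin n) := MonomialOrder.lex
  set β := mo.degree g with hβ
  have hβD : β.degree = D := by
    have := hg (mo.coeff_degree_ne_zero_iff.mpr hg0)
    rw [Finsupp.degree_eq_weight_one]
    exact this
  have key : ∀ e i, i + e = L → ∀ x ∈ U ^ i, x ∈ W := by
    intro e
    induction e with
    | zero =>
      intro i hi x hx
      rw [show i = L by omega, hL] at hx
      rw [(Submodule.mem_bot T).mp hx]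
      exact W.zero_mem
    | succ e ih =>
      intro i hi
      have ih' := ih (i + 1) (by omega)
      have hmon : ∀ (w : Fin n →₀ ℕ), w.degree = i → ∀ j,
          v j * aeval u (monomial w (1 : k)) ∈ W := by
        intro w
        induction hs : mo.toSyn w using WellFoundedLT.induction generalizing w with
        | ind s ihs =>
        intro hw j
        by_cases hstd : β ≤ w
        · obtain ⟨w', rfl⟩ := exists_add_of_le hstd
          have hdeg : i = D + w'.degree := by rw [← hw, map_add, hβD]
          set lc := g.coeff β with hlc
          have hlc0 : lc ≠ 0 := mo.coeff_degree_ne_zero_iff.mpr hg0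
          have hsum : aeval u g = aeval u (monomial β lc) +
              ∑ γ ∈ g.support.erase β, aeval u (monomial γ (g.coeff γ)) := by
            conv_lhs => rw [g.as_sum, map_sum]
            rw [Finset.add_sum_erase _ (fun γ => aeval u (monomial γ (g.coeff γ)))]
            exact mem_support_iff.mpr hlc0
          have hexp : v j * aeval u (monomial (β + w') (1 : k)) = lc⁻¹ • (
              v j * (aeval u g * aeval u (monomial w' (1 : k))) - 
              ∑ γ ∈ g.support.erase β, 
                g.coeff γ • (v j * aeval u (monomial (γ + w') (1 : k)))) := by
            rw [hsum, eq_inv_smul_iff₀ hlc0]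
            have hm : ∀ (γ : Fin n →₀ ℕ) (c : k), aeval u (monomial γ c) = c • aeval u (monomial γ (1 : k)) := by
              intro γ c
              rw [← map_smul, smul_monomial, smul_eq_mul, mul_one]
            have hm2 : ∀ γ, aeval u (monomial (γ + w') (1 : k)) =
                aeval u (monomial γ (1 : k)) * aeval u (monomial w' (1 : k)) := by
              intro γ
              rw [← map_mul, monomial_mul, one_mul]
            simp only [hm2]
            rw [hm β lc, add_mul, mul_add, Finset.sum_mul, Finset.mul_sum]
            rw [add_sub_assoc, ← Finset.sum_sub_distrib, Finset.sum_eq_zero, add_zero]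
            · simp [mul_smul_comm]
            · intro γ _
              rw [hm γ]
              simp [mul_smul_comm]
          rw [hexp]
          refine W.smul_mem _ (W.sub_mem ?_ (W.sum_mem fun γ hγ => W.smul_mem _ ?_))
          · apply ih'
            apply Ideal.mul_mem_left
            rw [show i + 1 = (D + 1) + w'.degree by omega, pow_add]
            exact Ideal.mul_mem_mul hgU (aeval_monomial_mem_pow u w' 1)
          · rw [Finset.mem_erase] at hγ
            have hγD : γ.degree = D := by
              have := hg (mem_support_iff.mp hγ.2)
              rw [Finsupp.degree_eq_weight_one]
              exact this
            refine ihs (mo.toSyn (γ + w')) ?_ (γ + w') rfl ?_ j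
            · rw [← hs, map_add, map_add]
              refine add_lt_add_left (lt_of_le_of_ne (mo.le_degree hγ.2) ?_) _
              intro h
              exact hγ.1 (mo.toSyn.injective h)
            · rw [map_add, hγD, hdeg]
        · refine Submodule.subset_span ⟨(j, ⟨w, ?_⟩), ?_⟩
          · rw [Finsupp.le_def] at hstd
            push Not at hstd
            obtain ⟨l, hl⟩ := hstd
            simp only [stdIdx, Finset.mem_biUnion, Finset.mem_univ, true_and,
              Fintype.mem_piFinset]
            refine ⟨l, fun a => ?_⟩
            split_ifs with h
            · subst h
              have := Finsupp.le_degree a β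
              simp only [Finset.mem_range]
              omega
            · have := Finsupp.le_degree a w
              simp only [Finset.mem_range]
              omega
          · simp only
            congr 3
            ext
            simp
      intro x hx
      rw [span_range_pow (k := k)] at hx
      have hgen : ∀ t : T, t * x ∈ W := by
        induction hx using Submodule.span_induction with
        | mem x hx => 
          obtain ⟨w, hw, rfl⟩ := hx
          intro t
          obtain ⟨t', ht', htU⟩ := hV t
          rw [← sub_add_cancel t t', add_mul]
          refine W.add_mem ?_ ?_
          · apply ih'
            rw [add_comm, pow_add, pow_one]
            refine Ideal.mul_mem_mul htU ?_
            have := aeval_monomial_mem_pow u w (1 : k)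
            rwa [show w.degree = i from hw] at this
          · clear htU
            induction ht' using Submodule.span_induction with
            | mem y hy => 
              obtain ⟨j, rfl⟩ := hy
              exact hmon w hw j
            | zero => simp
            | add a b _ _ ha hb => 
              rw [add_mul]
              exact W.add_mem ha hb
            | smul c a _ ha =>
              rw [smul_mul_assoc]
              exact W.smul_mem _ ha
        | zero => simp
        | add a b _ _ ha hb =>
          intro t
          rw [mul_add]
          exact W.add_mem (ha t) (hb t)
        | smul c a _ ha =>
          intro t
          rw [smul_eq_mul, ← mul_assoc]
          exact ha _
      simpa using hgen 1
  rw [eq_top_iff]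
  intro x _
  exact key L 0 (by omega) x (by simp)

theorem count {k T : Type*} [Field k] [CommRing T] [Algebra k T] {n L D : ℕ} (u : Fin n → T)
    {J : Type*} [Fintype J] (v : J → T)
    (hV : ∀ t, ∃ w ∈ Submodule.span k (Set.range v), t - w ∈ Ideal.span (Set.range u))
    (hL : Ideal.span (Set.range u) ^ L = ⊥) (g : MvPolynomial (Fin n) k) (hg : g.IsHomogeneous D)
    (hg0 : g ≠ 0) (hgU : aeval u g ∈ Ideal.span (Set.range u) ^ (D + 1)) :
    Module.Finite k T ∧ Module.finrank k T ≤ Fintype.card J * (n * (D * L ^ (n - 1))) := by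
  have h := count_span u v hV hL g hg hg0 hgU
  refine ⟨⟨⟨(Set.finite_range _).toFinset, by simpa using h⟩⟩, ?_⟩
  have h2 := finrank_range_le_card (R := k) (fun z : J × stdIdx n D L =>
      v z.1 * aeval u (monomial (Finsupp.equivFunOnFinite.symm z.2.1) (1 : k)))
  rw [Set.finrank, h, finrank_top, Fintype.card_prod, Fintype.card_coe] at h2
  exact h2.trans (Nat.mul_le_mul le_rfl (card_stdIdx n D L))

end SymPow

namespace SymPow
open MvPolynomial IsLocalRing

theorem asym (d₁ d₂ n E A B : ℕ) (hn : d₁ + d₂ = n)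
    (h : ∀ t : ℕ, t.choose d₁ * t.choose d₂ ≤ E * (n * (A * t + B) ^ (n - 1))) : False := by
  rcases Nat.eq_zero_or_pos n with rfl | hpos
  · have := h 0
    obtain ⟨rfl, rfl⟩ : d₁ = 0 ∧ d₂ = 0 := by omega
    simp at this
  set Q := d₁.factorial * d₂.factorial * (E * (n * (A * (1 + n) + B) ^ (n - 1))) with hQ
  set τ := Q + 1 with hτ
  have h1 := Nat.pow_sub_le_descFactorial (τ + n) d₁
  have h2 := Nat.pow_sub_le_descFactorial (τ + n) d₂
  rw [Nat.descFactorial_eq_factorial_mul_choose] at h1 h2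
  have h3 := h (τ + n)
  have h1' : τ ^ d₁ ≤ d₁.factorial * (τ + n).choose d₁ :=
    (Nat.pow_le_pow_left (by omega) _).trans h1
  have h2' : τ ^ d₂ ≤ d₂.factorial * (τ + n).choose d₂ :=
    (Nat.pow_le_pow_left (by omega) _).trans h2
  have h4 : (A * (τ + n) + B) ^ (n - 1) ≤ ((A * (1 + n) + B) * τ) ^ (n - 1) := by
    apply Nat.pow_le_pow_left
    have : 1 ≤ τ := by omega
    have e1 : n ≤ n * τ := Nat.le_mul_of_pos_right _ this
    have e2 : B ≤ B * τ := Nat.le_mul_of_pos_right _ this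
    have e3 : A * (τ + n) ≤ A * (τ + n * τ) := Nat.mul_le_mul_left _ (by omega)
    calc A * (τ + n) + B ≤ A * (τ + n * τ) + B * τ := by omega
      _ = _ := by ring
  have h5 : τ ^ n ≤ Q * τ ^ (n - 1) := by
    calc τ ^ n = τ ^ d₁ * τ ^ d₂ := by rw [← pow_add, hn]
      _ ≤ (d₁.factorial * (τ + n).choose d₁) * (d₂.factorial * (τ + n).choose d₂) :=
          Nat.mul_le_mul h1' h2'
      _ = d₁.factorial * d₂.factorial * ((τ + n).choose d₁ * (τ + n).choose d₂) := by ring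
      _ ≤ d₁.factorial * d₂.factorial * (E * (n * ((A * (1 + n) + B) * τ) ^ (n - 1))) := by
          refine Nat.mul_le_mul_left _ (h3.trans ?_)
          gcongr
      _ = Q * τ ^ (n - 1) := by rw [mul_pow, hQ]; ring
  have h6 : τ ^ n = τ * τ ^ (n - 1) := by
    rw [← pow_succ', Nat.sub_add_cancel hpos]
  rw [h6] at h5
  have := Nat.le_of_mul_le_mul_right h5 (Nat.pow_pos (by omega))
  omega

theorem length_le_finrank {R k Q : Type*} [CommRing R] [Field k] [CommRing Q] [Algebra R Q]
    [Algebra k Q] [Module.Finite k Q] (h : Function.Surjective (algebraMap R Q)) :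
    Module.length R Q ≤ Module.finrank k Q := by
  rw [Module.length_eq_of_surjective (R := Q) h, ← Module.length_eq_finrank]
  rw [← Module.length_top (R := Q) (M := Q), ← Module.length_top (R := k) (M := Q)]
  exact Submodule.length_le_length_restrictScalars k (⊤ : Submodule Q Q)

section
variable {R : Type*} [CommRing R] [IsLocalRing R]

theorem exists_sub_mem_of_isCoeff {M : ℕ} 
    (σ : ResidueField R →+* R ⧸ maximalIdeal R ^ M) (hσ : IsCoeff σ) (r : R) :
    ∃ y ∈ maximalIdeal R, Ideal.Quotient.mk _ r = σ (residue R r) + Ideal.Quotient.mk _ y := by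
  obtain ⟨s, hs⟩ := Ideal.Quotient.mk_surjective (σ (residue R r))
  refine ⟨r - s, ?_, ?_⟩
  · rw [← residue_eq_zero_iff, map_sub, hσ _ _ hs.symm, sub_self]
  · rw [← hs, map_sub]; ring

theorem evalCoeff_surjective {n M : ℕ} (x : Fin n → R)
    (hx : Ideal.span (Set.range x) = maximalIdeal R)
    (σ : ResidueField R →+* R ⧸ maximalIdeal R ^ M) (hσ : IsCoeff σ) :
    Function.Surjective (eval₂Hom σ (fun i => Ideal.Quotient.mk (maximalIdeal R ^ M) (x i))) := by
  set ev := eval₂Hom σ (fun i => Ideal.Quotient.mk (maximalIdeal R ^ M) (x i)) with hev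
  have key : ∀ j, ∀ r : R, ∃ G, ∃ r' ∈ maximalIdeal R ^ j,
      Ideal.Quotient.mk _ r = ev G + Ideal.Quotient.mk _ r' := by
    intro j
    induction j with
    | zero => intro r; exact ⟨0, r, by simp, by simp⟩
    | succ j ih =>
      have key2 : ∀ r ∈ maximalIdeal R ^ j, ∀ a : R, ∃ G, ∃ r' ∈ maximalIdeal R ^ (j + 1),
          Ideal.Quotient.mk _ (a * r) = ev G + Ideal.Quotient.mk _ r' := by
        intro r hr
        rw [← hx, span_range_pow (k := R)] at hr
        induction hr using Submodule.span_induction with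
        | mem r hr =>
          obtain ⟨w, hw, rfl⟩ := hr
          intro a
          obtain ⟨y, hy, hay⟩ := exists_sub_mem_of_isCoeff σ hσ a
          refine ⟨monomial w (residue R a), y * aeval x (monomial w (1 : R)), ?_, ?_⟩
          · rw [add_comm, pow_add, pow_one]
            refine Ideal.mul_mem_mul hy ?_
            have := aeval_monomial_mem_pow x w (1 : R)
            rwa [hx, show w.degree = j from hw] at this
          · rw [map_mul, hay, add_mul, map_mul]
            congr 1
            simp [hev, eval₂_monomial, aeval_monomial, Finsupp.prod, map_prod]
        | zero => intro a; exact ⟨0, 0, by simp, by simp⟩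
        | add y z _ _ h1 h2 =>
          intro a
          obtain ⟨G1, r1, hr1, e1⟩ := h1 a
          obtain ⟨G2, r2, hr2, e2⟩ := h2 a
          refine ⟨G1 + G2, r1 + r2, add_mem hr1 hr2, ?_⟩
          rw [mul_add, map_add, e1, e2, map_add, map_add]
          ring
        | smul c y _ h =>
          intro a
          rw [smul_eq_mul, ← mul_assoc]
          exact h _
      intro r
      obtain ⟨G, r', hr', e⟩ := ih r
      obtain ⟨G2, r2, hr2, e2⟩ := key2 r' hr' 1
      refine ⟨G + G2, r2, hr2, ?_⟩
      rw [one_mul] at e2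
      rw [e, e2, map_add, add_assoc]
  intro r
  obtain ⟨r, rfl⟩ := Ideal.Quotient.mk_surjective r
  obtain ⟨G, r', hr', e⟩ := key M r
  refine ⟨G, ?_⟩
  rw [e, Ideal.Quotient.eq_zero_iff_mem.mpr hr', add_zero]

theorem evalCoeff_ker {K : Type*} [Field K] [Algebra K R] [IsNoetherianRing R]
    {n M : ℕ} (hM : 1 ≤ M) (x : Fin n → R)
    (hx : Ideal.span (Set.range x) = maximalIdeal R) (hdim : ringKrullDim R = n)
    (σ : ResidueField R →+* R ⧸ maximalIdeal R ^ M) (hσ : IsCoeff σ)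
    (G : MvPolynomial (Fin n) (ResidueField R))
    (hG : eval₂Hom σ (fun i => Ideal.Quotient.mk (maximalIdeal R ^ M) (x i)) G = 0) :
    G ∈ idealOfVars (Fin n) (ResidueField R) ^ M := by
  classical
  by_contra hcon
  have hex : ∃ D, ∃ w : Fin n →₀ ℕ, w.degree = D ∧ G.coeff w ≠ 0 := by
    rw [mem_pow_idealOfVars_iff'] at hcon
    push Not at hcon
    obtain ⟨w, -, hw⟩ := hcon
    exact ⟨_, w, rfl, hw⟩
  set D := Nat.find hex with hD
  have hDM : D < M := by
    rw [mem_pow_idealOfVars_iff'] at hcon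
    push Not at hcon
    obtain ⟨w, h1, hw⟩ := hcon
    exact lt_of_le_of_lt (Nat.find_min' hex ⟨w, rfl, hw⟩) h1
  obtain ⟨w₀, hw₀, hw₀'⟩ := Nat.find_spec hex
  have hlow : ∀ w : Fin n →₀ ℕ, w.degree < D → G.coeff w = 0 := by
    intro w hw
    by_contra h
    exact Nat.find_min hex hw ⟨w, rfl, h⟩
  set g := homogeneousComponent D G with hg
  have hg0 : g ≠ 0 := by
    intro h
    have := congrArg (coeff w₀) h
    rw [hg, coeff_homogeneousComponent, if_pos hw₀] at this
    exact hw₀' (by simpa using this)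
  have hGg : G - g ∈ idealOfVars (Fin n) (ResidueField R) ^ (D + 1) := by
    rw [mem_pow_idealOfVars_iff']
    intro w hw
    rw [coeff_sub, hg, coeff_homogeneousComponent]
    split_ifs with h
    · simp
    · rw [hlow w (by omega)]; simp
  obtain ⟨C, hC⟩ := length_lower' (⊥ : Ideal R) n (by
    rw [← hdim]
    exact (ringKrullDim_eq_of_ringEquiv (RingEquiv.quotientBot R).symm).le)
  refine asym n 0 n D C (1 + M) (by omega) fun t => ?_
  set N := C * t + (1 + M) with hN
  obtain ⟨σN, hσN, hcomp⟩ := (coeff_fields (K := K) (R := R)).2 M N hM (by omega) σ hσ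
  let _ : Algebra (ResidueField R) (R ⧸ maximalIdeal R ^ N) := σN.toAlgebra
  set u : Fin n → R ⧸ maximalIdeal R ^ N := fun i => Ideal.Quotient.mk _ (x i) with hu
  have hU : Ideal.span (Set.range u) = (maximalIdeal R).map (Ideal.Quotient.mk _) := by
    have h := congrArg (Ideal.map (Ideal.Quotient.mk (maximalIdeal R ^ N))) hx
    rw [← h, Ideal.map_span, ← Set.range_comp]
    rfl
  have hmapvars : ∀ j, (idealOfVars (Fin n) (ResidueField R) ^ j).map (aeval u) =
      Ideal.span (Set.range u) ^ j := by
    intro j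
    rw [Ideal.map_pow, idealOfVars, Ideal.map_span]
    congr 2
    ext; simp
  have hGN : aeval u G ∈ Ideal.span (Set.range u) ^ (D + 1) := by
    obtain ⟨r, hr⟩ := Ideal.Quotient.mk_surjective (aeval u G)
    have h1 : Ideal.Quotient.factorPow (maximalIdeal R) (show M ≤ N by omega) (aeval u G) = 0 := by
      rw [← hG, ← hcomp]
      have : aeval u G = eval₂Hom σN u G := rfl
      rw [this, ← RingHom.comp_apply]
      congr 1
      apply MvPolynomial.ringHom_ext
      · intro c; simp
      · intro i; simp [hu]
    rw [← hr] at h1 ⊢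
    have h2 : r ∈ maximalIdeal R ^ M := by
      rw [← Ideal.Quotient.eq_zero_iff_mem]
      simpa using h1
    rw [hU, ← Ideal.map_pow]
    exact Ideal.mem_map_of_mem _ (Ideal.pow_le_pow_right (by omega) h2)
  have hgN : aeval u g ∈ Ideal.span (Set.range u) ^ (D + 1) := by
    have : aeval u g = aeval u G - aeval u (G - g) := by rw [map_sub]; ring
    rw [this]
    refine sub_mem hGN ?_
    rw [← hmapvars]
    exact Ideal.mem_map_of_mem _ hGg
  obtain ⟨hfin, hle⟩ := count (L := N) u (fun _ : Unit => (1 : R ⧸ maximalIdeal R ^ N)) (by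
      intro r
      obtain ⟨r, rfl⟩ := Ideal.Quotient.mk_surjective r
      obtain ⟨y, hy, e⟩ := exists_sub_mem_of_isCoeff σN hσN r
      refine ⟨σN (residue R r), ?_, ?_⟩
      · have : σN (residue R r) = (residue R r) • (1 : R ⧸ maximalIdeal R ^ N) := by
          rw [Algebra.smul_def, mul_one]; rfl
        rw [this]
        exact Submodule.smul_mem _ _ (Submodule.subset_span ⟨(), rfl⟩)
      · rw [e, add_sub_cancel_left, hU]
        exact Ideal.mem_map_of_mem _ hy) (by
      rw [hU, ← Ideal.map_pow]
      exact Ideal.map_quotient_self _) g (homogeneousComponent_isHomogeneous D G) hg0 hgN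
  have hlen : (t.choose n : ℕ∞) ≤ Module.finrank (ResidueField R) (R ⧸ maximalIdeal R ^ N) := by
    refine (hC t).trans (le_trans ?_ (length_le_finrank (R := R) Ideal.Quotient.mk_surjective))
    have h : maximalIdeal R ^ N ≤ ⊥ ⊔ maximalIdeal R ^ (C * t + 1) :=
      le_sup_of_le_right (Ideal.pow_le_pow_right (by omega))
    exact Module.length_le_of_surjective (Submodule.factor h) (Submodule.factor_surjective h)
  have hlen' : t.choose n ≤ _ := (Nat.cast_le.mp hlen).trans hle
  calc _ ≤ _ := by simpa using hlen'
    _ = _ := by ring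
end
end SymPow

namespace SymPow
open MvPolynomial IsLocalRing

/-- Taylor expansion. -/
noncomputable def taylorHom (k : Type*) {S : Type*} [CommRing k] [CommRing S] [Algebra k S] {n : ℕ}
    (x : Fin n → S) : MvPolynomial (Fin n) k →ₐ[k] MvPolynomial (Fin n) S :=
  aeval (fun i => C (x i) + X i)

section
variable {k S : Type*} [CommRing k] [CommRing S] [Algebra k S] {n : ℕ} (x : Fin n → S)

theorem constantCoeff_taylorHom (G : MvPolynomial (Fin n) k) :
    constantCoeff (taylorHom k x G) = aeval x G := by
  have : (constantCoeff.comp (taylorHom k x).toRingHom) = (aeval x : _ →ₐ[k] S).toRingHom := by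
    apply MvPolynomial.ringHom_ext
    · intro c
      simp [taylorHom, MvPolynomial.algebraMap_apply]
    · intro i
      simp [taylorHom]
  exact congrArg (fun φ => φ G) this

theorem coeff_mem_of_mem {J : Ideal S} {a : ℕ} {H : MvPolynomial (Fin n) S}
    (hH : H ∈ J.map C ⊔ idealOfVars (Fin n) S ^ a) (w : Fin n →₀ ℕ) (hw : w.degree < a) :
    H.coeff w ∈ J := by
  obtain ⟨A, hA, B, hB, rfl⟩ := Submodule.mem_sup.mp hH
  rw [mem_map_C_iff] at hA
  rw [mem_pow_idealOfVars_iff'] at hB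
  rw [coeff_add, hB w hw, add_zero]
  exact hA w

theorem sup_pow_le_sup_pow {T : Type*} [CommRing T] (I J : Ideal T) (a : ℕ) :
    (I ⊔ J) ^ a ≤ I ⊔ J ^ a := by
  induction a with
  | zero => simp
  | succ a ih =>
    rw [pow_succ]
    refine (Ideal.mul_mono_left ih).trans ?_
    rw [Ideal.sup_mul, Ideal.mul_sup (J ^ a), pow_succ]
    refine sup_le (le_sup_of_le_left Ideal.mul_le_left) ?_
    exact sup_le (le_sup_of_le_left Ideal.mul_le_right) le_sup_right

theorem sub_C_mem_idealOfVars (H : MvPolynomial (Fin n) S) :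
    H - C (constantCoeff H) ∈ idealOfVars (Fin n) S := by
  rw [← pow_one (idealOfVars (Fin n) S), mem_pow_idealOfVars_iff']
  intro w hw
  have : w = 0 := by
    rw [← Finsupp.degree_eq_zero_iff]; omega
  subst this
  simp [constantCoeff_eq]

theorem taylor_mem (p' : Ideal S) {M a : ℕ} (haM : a ≤ M)
    (hsurj : Function.Surjective (aeval x : MvPolynomial (Fin n) k →ₐ[k] S))
    (hker : ∀ G : MvPolynomial (Fin n) k, aeval x G = 0 → G ∈ idealOfVars (Fin n) k ^ M)
    (G : MvPolynomial (Fin n) k) (hG : aeval x G ∈ p' ^ a) :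
    taylorHom k x G ∈ (p' ⊔ Ideal.span (Set.range x) ^ (M - a)).map C ⊔ idealOfVars (Fin n) S ^ a := by
  set P := p'.comap (aeval x : MvPolynomial (Fin n) k →ₐ[k] S) with hP
  have hmap : P.map (aeval x : MvPolynomial (Fin n) k →ₐ[k] S) = p' :=
    Ideal.map_comap_of_surjective _ hsurj _
  rw [← hmap, ← Ideal.map_pow, Ideal.mem_map_iff_of_surjective _ hsurj] at hG
  obtain ⟨G', hG', e⟩ := hG
  have h1 : P.map (taylorHom k x) ≤ p'.map C ⊔ idealOfVars (Fin n) S := by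
    rw [Ideal.map_le_iff_le_comap]
    intro H hH
    rw [Ideal.mem_comap]
    have : taylorHom k x H = C (aeval x H) + (taylorHom k x H - C (constantCoeff (taylorHom k x H))) := by
      rw [constantCoeff_taylorHom]; ring
    rw [this]
    exact Submodule.add_mem_sup (Ideal.mem_map_of_mem _ hH) (sub_C_mem_idealOfVars _)
  have h2 : (idealOfVars (Fin n) k).map (taylorHom k x) ≤
      (Ideal.span (Set.range x)).map C ⊔ idealOfVars (Fin n) S := by
    rw [Ideal.map_le_iff_le_comap, idealOfVars, Ideal.span_le]
    rintro _ ⟨i, rfl⟩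
    rw [SetLike.mem_coe, Ideal.mem_comap]
    have : taylorHom k x (X i) = C (x i) + X i := by simp [taylorHom]
    rw [this]
    exact Submodule.add_mem_sup (Ideal.mem_map_of_mem _ (Ideal.subset_span ⟨i, rfl⟩))
      (Ideal.subset_span ⟨i, rfl⟩)
  have e1 : taylorHom k x G = taylorHom k x G' + taylorHom k x (G - G') := by
    rw [map_sub]; ring
  rw [e1, Ideal.map_sup]
  refine add_mem ?_ ?_
  · have h3 : taylorHom k x G' ∈ (P ^ a).map (taylorHom k x) := Ideal.mem_map_of_mem _ hG'
    rw [Ideal.map_pow] at h3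
    have h4 := sup_pow_le_sup_pow _ _ _ (Ideal.pow_right_mono h1 a h3)
    exact SetLike.le_def.mp (sup_le_sup_right le_sup_left _) h4
  · have h3 : taylorHom k x (G - G') ∈ (idealOfVars (Fin n) k ^ M).map (taylorHom k x) :=
      Ideal.mem_map_of_mem _ (hker _ (by rw [map_sub, e, sub_self]))
    rw [Ideal.map_pow] at h3
    have h4 := Ideal.pow_right_mono h2 M h3
    rw [← Nat.sub_add_cancel haM] at h4
    have h5 := Ideal.sup_pow_add_le_pow_sup_pow h4
    rw [← Ideal.map_pow] at h5
    exact SetLike.le_def.mp (sup_le_sup_right le_sup_right _) h5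

theorem taylor_coeff_induct (J : ℕ → Ideal S) {a : ℕ} (s f : MvPolynomial (Fin n) k)
    (hJ : ∀ w : Fin n →₀ ℕ, w.degree < a → (taylorHom k x (s * f)).coeff w ∈ J 0)
    (hmono : Monotone J)
    (hcol : ∀ j < a, ∀ y, aeval x s * y ∈ J j → y ∈ J (j + 1)) :
    ∀ j ≤ a, ∀ w : Fin n →₀ ℕ, w.degree < j → (taylorHom k x f).coeff w ∈ J j := by
  classical
  intro j
  induction j with
  | zero => intro _ w hw; omega
  | succ j ih =>
    intro hj w hw
    rcases Nat.lt_or_ge w.degree j with h | h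
    · exact hmono (Nat.le_succ j) (ih (by omega) w h)
    apply hcol j hj
    have h1 := hJ w (by omega)
    rw [map_mul, coeff_mul, ← Finset.add_sum_erase _ _ (a := (0, w)) (by simp)] at h1
    have h2 : ∑ y ∈ (Finset.HasAntidiagonal.antidiagonal w).erase (0, w),
        coeff y.1 (taylorHom k x s) * coeff y.2 (taylorHom k x f) ∈ J j := by
      refine sum_mem fun y hy => Ideal.mul_mem_left _ _ (ih (by omega) _ ?_)
      rw [Finset.mem_erase, Finset.HasAntidiagonal.mem_antidiagonal] at hy
      have h3 : y.1.degree + y.2.degree = w.degree := by rw [← map_add, hy.2]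
      have h4 : y.1.degree ≠ 0 := by
        intro h0
        rw [Finsupp.degree_eq_zero_iff] at h0
        apply hy.1
        ext1
        · exact h0
        · rw [← hy.2, h0, zero_add]
      omega
    have h3 := (Submodule.add_mem_iff_left _ h2).mp (hmono (Nat.zero_le j) h1)
    rwa [← constantCoeff_taylorHom, constantCoeff_eq]
end

theorem taylor_symbolic {K R : Type*} [Field K] [CommRing R] [IsLocalRing R] [Algebra K R]
    [IsNoetherianRing R] {n : ℕ} (x : Fin n → R)
    (hx : Ideal.span (Set.range x) = maximalIdeal R) (hdim : ringKrullDim R = n)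
    (p : Ideal R) [p.IsPrime] (s : R) (hs : s ∉ p) (a : ℕ) (f : R) (hsf : s * f ∈ p ^ a) :
    ∃ c : ℕ, ∀ N M, 1 ≤ M → N + a + a * c ≤ M →
      ∀ (σ : ResidueField R →+* R ⧸ maximalIdeal R ^ M), IsCoeff σ →
      let _ : Algebra (ResidueField R) (R ⧸ maximalIdeal R ^ M) := σ.toAlgebra
      ∀ F : MvPolynomial (Fin n) (ResidueField R),
        aeval (fun i => Ideal.Quotient.mk (maximalIdeal R ^ M) (x i)) F =
          Ideal.Quotient.mk (maximalIdeal R ^ M) f →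
        ∀ w : Fin n →₀ ℕ, w.degree < a →
        (taylorHom (ResidueField R)
          (fun i => Ideal.Quotient.mk (maximalIdeal R ^ M) (x i)) F).coeff w ∈
          (p ⊔ maximalIdeal R ^ N).map (Ideal.Quotient.mk (maximalIdeal R ^ M)) := by
  obtain ⟨c, hc⟩ := artinRees_colon (maximalIdeal R) p s hs
  refine ⟨c, fun N M hM hNM σ hσ => ?_⟩
  intro _ F hF w hw
  set π := Ideal.Quotient.mk (maximalIdeal R ^ M) with hπ
  set x' : Fin n → R ⧸ maximalIdeal R ^ M := fun i => π (x i) with hx'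
  have hspan : Ideal.span (Set.range x') = (maximalIdeal R).map π := by
    have h := congrArg (Ideal.map π) hx
    rw [← h, Ideal.map_span, ← Set.range_comp]
    rfl
  have hsurj : Function.Surjective
      (aeval x' : MvPolynomial (Fin n) (ResidueField R) →ₐ[ResidueField R] _) :=
    evalCoeff_surjective x hx σ hσ
  have hker := fun G hG => evalCoeff_ker (K := K) hM x hx hdim σ hσ G hG
  obtain ⟨s', hs'⟩ := hsurj (π s)
  set J : ℕ → Ideal (R ⧸ maximalIdeal R ^ M) :=
    fun j => (p ⊔ maximalIdeal R ^ (M - a - j * c)).map π with hJ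
  have hmono : Monotone J := by
    intro i j hij
    refine Ideal.map_mono (sup_le_sup_left (Ideal.pow_le_pow_right ?_) _)
    have := Nat.mul_le_mul_right c hij
    omega
  have h0 : ∀ w : Fin n →₀ ℕ, w.degree < a →
      (taylorHom (ResidueField R) x' (s' * F)).coeff w ∈ J 0 := by
    refine coeff_mem_of_mem ?_
    have := taylor_mem x' (p.map π) (a := a) (M := M) (by omega) hsurj hker (s' * F) (by
      rw [map_mul, hs', hF, ← map_mul, ← Ideal.map_pow]
      exact Ideal.mem_map_of_mem _ hsf)
    rw [hspan, ← Ideal.map_pow, ← Ideal.map_sup] at this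
    simpa [hJ] using this
  have key := taylor_coeff_induct x' J s' F h0 hmono (by
    intro j hj y hy
    obtain ⟨y, rfl⟩ := Ideal.Quotient.mk_surjective y
    have hle : maximalIdeal R ^ M ≤ p ⊔ maximalIdeal R ^ (M - a - j * c) :=
      le_sup_of_le_right (Ideal.pow_le_pow_right (by omega))
    rw [hs'] at hy
    have hy' : s * y ∈ p ⊔ maximalIdeal R ^ (M - a - j * c) := by
      rw [← map_mul] at hy
      have := Ideal.mem_comap.mpr hy
      rwa [Ideal.comap_map_of_surjective _ Ideal.Quotient.mk_surjective, ← RingHom.ker_eq_comap_bot,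
        Ideal.mk_ker, sup_eq_left.mpr hle] at this
    have := hc _ _ hy'
    refine Ideal.mem_map_of_mem _ ?_
    have e : M - a - (j + 1) * c = M - a - j * c - c := by
      rw [Nat.add_mul]; omega
    rw [e]; exact this) a le_rfl w hw
  refine Ideal.map_mono (sup_le_sup_left (Ideal.pow_le_pow_right ?_) _) key
  omega
end SymPow

namespace SymPow
open MvPolynomial IsLocalRing

theorem std_span {k T : Type*} [Field k] [CommRing T] [Algebra k T] {n ℓ : ℕ} (y : Fin n → T)
    (U : Ideal T) (hy : ∀ i, y i ^ ℓ ∈ U) (G : MvPolynomial (Fin n) k) :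
    ∃ v ∈ Submodule.span k (Set.range (fun w : Fin n → Fin ℓ => ∏ i, y i ^ (w i : ℕ))),
      aeval y G - v ∈ U := by
  induction G using MvPolynomial.induction_on' with
  | add p q hp hq =>
    obtain ⟨v, hv, hv'⟩ := hp
    obtain ⟨w, hw, hw'⟩ := hq
    refine ⟨v + w, add_mem hv hw, ?_⟩
    rw [map_add, add_sub_add_comm]
    exact add_mem hv' hw'
  | monomial w c =>
    have e : aeval y (monomial w c) = c • ∏ i, y i ^ w i := by
      rw [aeval_monomial, Algebra.smul_def, Finsupp.prod_fintype _ _ (by simp)]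
    by_cases h : ∀ i, w i < ℓ
    · refine ⟨_, Submodule.smul_mem _ c (Submodule.subset_span ⟨fun i => ⟨w i, h i⟩, rfl⟩), ?_⟩
      simp [e]
    · push Not at h
      obtain ⟨i, hi⟩ := h
      refine ⟨0, zero_mem _, ?_⟩
      rw [sub_zero, e, Algebra.smul_def]
      refine Ideal.mul_mem_left _ _ ?_
      refine Ideal.mem_of_dvd _ (Finset.dvd_prod_of_mem _ (Finset.mem_univ i)) ?_
      exact Ideal.mem_of_dvd _ (pow_dvd_pow _ hi) (hy i)

section
variable {S T : Type*} [CommRing S] [CommRing T] {n : ℕ}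

theorem pow_dvd_eval₂ (j : S →+* T) (u : Fin n → T) (ξ : Polynomial T) (H : MvPolynomial (Fin n) S)
    (a : ℕ) (h : ∀ w : Fin n →₀ ℕ, w.degree < a → j (H.coeff w) = 0) :
    ξ ^ a ∣ eval₂ (Polynomial.C.comp j) (fun i => ξ * Polynomial.C (u i)) H := by
  rw [eval₂_eq]
  refine Finset.dvd_sum fun w _ => ?_
  rcases Nat.lt_or_ge w.degree a with hw | hw
  · rw [RingHom.comp_apply, h w hw]; simp
  · refine dvd_mul_of_dvd_right ?_ _
    simp_rw [mul_pow]
    rw [Finset.prod_mul_distrib, Finset.prod_pow_eq_pow_sum]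
    exact dvd_mul_of_dvd_left (pow_dvd_pow _ hw) _

theorem coeff_eval₂ (j : S →+* T) (u : Fin n → T) (H : MvPolynomial (Fin n) S) (r : ℕ) :
    (eval₂ (Polynomial.C.comp j) (fun i => Polynomial.X * Polynomial.C (u i)) H).coeff r =
      eval₂ j u (homogeneousComponent r H) := by
  induction H using MvPolynomial.induction_on' with
  | add p q hp hq =>
    rw [eval₂_add, Polynomial.coeff_add, hp, hq, map_add, eval₂_add]
  | monomial w c =>
    rw [homogeneousComponent_of_mem (n := w.degree)
      ((mem_homogeneousSubmodule _ _).mpr (isHomogeneous_monomial c rfl)), eval₂_monomial,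
      Finsupp.prod_fintype _ _ (by simp)]
    simp_rw [mul_pow]
    rw [Finset.prod_mul_distrib, Finset.prod_pow_eq_pow_sum,
      show ∑ i, w i = w.degree from (Finsupp.degree_eq_sum w).symm]
    have e : (∏ i, Polynomial.C (u i) ^ w i : Polynomial T) = Polynomial.C (∏ i, u i ^ w i) := by
      simp
    rw [e, RingHom.comp_apply, mul_comm, mul_assoc, ← Polynomial.C_mul, Polynomial.coeff_X_pow_mul',
      Polynomial.coeff_C]
    split_ifs with h1 h2 h3 h4 h5
    · rw [eval₂_monomial, Finsupp.prod_fintype _ _ (by simp), mul_comm]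
    · omega
    · omega
    · simp
    · omega
    · simp

theorem eval₂_homogeneous_mem (j : S →+* T) (u : Fin n → T) (I : Ideal T)
    (H : MvPolynomial (Fin n) S) (r : ℕ) (hH : H.IsHomogeneous r) (h : ∀ w, j (H.coeff w) ∈ I) :
    eval₂ j u H ∈ I * Ideal.span (Set.range u) ^ r := by
  rw [eval₂_eq]
  refine sum_mem fun w hw => Ideal.mul_mem_mul (h w) ?_
  have := aeval_monomial_mem_pow (k := ℤ) u w 1
  rw [show w.degree = r from ?_] at this
  · simpa [aeval_monomial, Finsupp.prod] using this
  · rw [mem_support_iff] at hw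
    rw [Finsupp.degree_eq_weight_one]
    exact hH hw

end

section
variable {k S T : Type*} [Field k] [CommRing S] [Algebra k S] [CommRing T] [Algebra k T] {n : ℕ}

theorem taylor_coeff_sub_mem (x : Fin n → S) (f : MvPolynomial (Fin n) k) (w : Fin n →₀ ℕ) :
    (taylorHom k x f).coeff w - algebraMap k S (f.coeff w) ∈ Ideal.span (Set.range x) := by
  set m := Ideal.span (Set.range x) with hm
  have h : (MvPolynomial.map (Ideal.Quotient.mk m)).comp (taylorHom k x).toRingHom =
      MvPolynomial.map ((Ideal.Quotient.mk m).comp (algebraMap k S)) := by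
    apply MvPolynomial.ringHom_ext
    · intro c
      simp [taylorHom, MvPolynomial.algebraMap_apply]
    · intro i
      have : Ideal.Quotient.mk m (x i) = 0 :=
        Ideal.Quotient.eq_zero_iff_mem.mpr (Ideal.subset_span ⟨i, rfl⟩)
      simp [taylorHom, this]
  have h2 := congrArg (fun φ => (φ f).coeff w) h
  rw [← Ideal.Quotient.eq]
  simpa [coeff_map] using h2

theorem diff_mem (x : Fin n → S)
    (hsurj : Function.Surjective (aeval x : MvPolynomial (Fin n) k →ₐ[k] S))
    (i₁ i₂ : S →ₐ[k] T) (β : S) :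
    i₂ β - i₁ β ∈ Ideal.span (Set.range fun i => i₂ (x i) - i₁ (x i)) := by
  set U := Ideal.span (Set.range fun i => i₂ (x i) - i₁ (x i)) with hU
  obtain ⟨G, rfl⟩ := hsurj β
  have h : ((Ideal.Quotient.mkₐ k U).comp i₂).comp (aeval x) =
      ((Ideal.Quotient.mkₐ k U).comp i₁).comp (aeval x) := by
    apply MvPolynomial.algHom_ext
    intro i
    simp only [AlgHom.comp_apply, aeval_X, Ideal.Quotient.mkₐ_eq_mk]
    rw [Ideal.Quotient.eq]
    exact Ideal.subset_span ⟨i, rfl⟩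
  rw [← Ideal.Quotient.eq]
  exact congrArg (fun φ => φ G) h

theorem coeff_mem_of_dvd (I : Ideal T) (F : Polynomial T) (a b : ℕ)
    (h1 : Polynomial.X ^ a ∣ F) (h2 : (Polynomial.X - 1) ^ b ∣ F)
    (hF : ∀ j, a + b ≤ j → F.coeff j ∈ I) (r : ℕ) : F.coeff r ∈ I := by
  have hcop : IsCoprime (Polynomial.X ^ a : Polynomial T) ((Polynomial.X - 1) ^ b) := by
    apply IsCoprime.pow
    exact ⟨1, -1, by ring⟩
  have h3 := hcop.mul_dvd h1 h2
  set P : Polynomial T := Polynomial.X ^ a * (Polynomial.X - 1) ^ b with hP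
  set π := Ideal.Quotient.mk I with hπ
  have h4 := map_dvd (Polynomial.mapRingHom π) h3
  have hz : Polynomial.map π F = 0 := by
    by_contra hne
    have : Nontrivial (T ⧸ I) := by
      by_contra hnt
      rw [not_nontrivial_iff_subsingleton] at hnt
      exact hne (Subsingleton.elim _ _)
    have eP : Polynomial.map π P = Polynomial.X ^ a * (Polynomial.X - Polynomial.C 1) ^ b := by
      simp [hP]
    have hmon : (Polynomial.map π P).Monic := by
      rw [eP]
      exact (Polynomial.monic_X_pow a).mul ((Polynomial.monic_X_sub_C 1).pow b)
    have hdeg : (Polynomial.map π P).natDegree = a + b := by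
      rw [eP, (Polynomial.monic_X_pow a).natDegree_mul ((Polynomial.monic_X_sub_C 1).pow b),
        (Polynomial.monic_X_sub_C 1).natDegree_pow, Polynomial.natDegree_X_sub_C]
      simp
    refine hmon.not_dvd_of_degree_lt hne ?_ h4
    rw [Polynomial.degree_eq_natDegree hmon.ne_zero, hdeg, Polynomial.degree_lt_iff_coeff_zero]
    intro j hj
    rw [Polynomial.coeff_map, Ideal.Quotient.eq_zero_iff_mem]
    exact hF j hj
  rw [← Ideal.Quotient.eq_zero_iff_mem, ← Polynomial.coeff_map, hz, Polynomial.coeff_zero]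

theorem initial_mem (x : Fin n → S)
    (i₁ i₂ : S →ₐ[k] T) (f : MvPolynomial (Fin n) k) (a b r : ℕ) (hr : r < a + b)
    (h1 : ∀ w : Fin n →₀ ℕ, w.degree < a → i₁ ((taylorHom k x f).coeff w) = 0)
    (h2 : ∀ w : Fin n →₀ ℕ, w.degree < b → i₂ ((taylorHom k x f).coeff w) = 0)
    (u : Fin n → T) (hu : ∀ i, u i = i₂ (x i) - i₁ (x i)) :
    aeval u (homogeneousComponent r f) ∈
      Ideal.span (Set.range fun i => i₁ (x i)) * Ideal.span (Set.range u) ^ r ⊔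
        Ideal.span (Set.range u) ^ (r + 1) := by
  set U := Ideal.span (Set.range u) with hU
  set F : Polynomial T := aeval (fun i => Polynomial.C (i₁ (x i)) + Polynomial.X * Polynomial.C (u i)) f
    with hF
  have e1 : F = eval₂ (Polynomial.C.comp i₁.toRingHom)
      (fun i => Polynomial.X * Polynomial.C (u i)) (taylorHom k x f) := by
    have : (aeval (fun i => Polynomial.C (i₁ (x i)) + Polynomial.X * Polynomial.C (u i)) :
        MvPolynomial (Fin n) k →ₐ[k] Polynomial T).toRingHom =
        (eval₂Hom (Polynomial.C.comp i₁.toRingHom)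
          (fun i => Polynomial.X * Polynomial.C (u i))).comp (taylorHom k x).toRingHom := by
      apply MvPolynomial.ringHom_ext
      · intro c
        simp [taylorHom, MvPolynomial.algebraMap_apply, Polynomial.algebraMap_apply]
      · intro i
        simp [taylorHom]
    exact congrArg (fun φ => φ f) this
  have e2 : F = eval₂ (Polynomial.C.comp i₂.toRingHom)
      (fun i => (Polynomial.X - 1) * Polynomial.C (u i)) (taylorHom k x f) := by
    have : (aeval (fun i => Polynomial.C (i₁ (x i)) + Polynomial.X * Polynomial.C (u i)) :
        MvPolynomial (Fin n) k →ₐ[k] Polynomial T).toRingHom =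
        (eval₂Hom (Polynomial.C.comp i₂.toRingHom)
          (fun i => (Polynomial.X - 1) * Polynomial.C (u i))).comp (taylorHom k x).toRingHom := by
      apply MvPolynomial.ringHom_ext
      · intro c
        simp [taylorHom, MvPolynomial.algebraMap_apply, Polynomial.algebraMap_apply]
      · intro i
        simp [taylorHom, hu]
        ring
    exact congrArg (fun φ => φ f) this
  have d1 : Polynomial.X ^ a ∣ F := by rw [e1]; exact pow_dvd_eval₂ _ u _ _ a h1
  have d2 : (Polynomial.X - 1) ^ b ∣ F := by rw [e2]; exact pow_dvd_eval₂ _ u _ _ b h2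
  have hcoeff : ∀ j, F.coeff j = eval₂ i₁.toRingHom u (homogeneousComponent j (taylorHom k x f)) := by
    intro j; rw [e1, coeff_eval₂]
  have h3 : F.coeff r ∈ U ^ (a + b) := by
    refine coeff_mem_of_dvd _ F a b d1 d2 (fun j hj => ?_) r
    rw [hcoeff]
    have := eval₂_homogeneous_mem i₁.toRingHom u ⊤ _ j (homogeneousComponent_isHomogeneous j
      (taylorHom k x f)) (by simp)
    rw [Ideal.top_mul] at this
    exact Ideal.pow_le_pow_right hj this
  have h4 := Ideal.pow_le_pow_right (show r + 1 ≤ a + b by omega) h3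
  have h5 : aeval u (homogeneousComponent r f) =
      eval₂ i₁.toRingHom u (homogeneousComponent r (MvPolynomial.map (algebraMap k S) f -
        taylorHom k x f)) + F.coeff r := by
    rw [hcoeff, ← eval₂_add, ← map_add, sub_add_cancel]
    have e : homogeneousComponent r (MvPolynomial.map (algebraMap k S) f) =
        MvPolynomial.map (algebraMap k S) (homogeneousComponent r f) := by
      ext w
      simp only [coeff_homogeneousComponent, coeff_map]
      split_ifs <;> simp
    rw [e, eval₂_map, aeval_def]
    congr 1
    ext c; simp
  rw [h5]
  refine Submodule.add_mem_sup ?_ h4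
  refine eval₂_homogeneous_mem _ u _ _ r (homogeneousComponent_isHomogeneous r _) fun w => ?_
  rw [coeff_homogeneousComponent]
  split_ifs
  · rw [coeff_sub, coeff_map, ← neg_sub, map_neg, neg_mem_iff]
    have := Ideal.mem_map_of_mem i₁.toRingHom (taylor_coeff_sub_mem x f w)
    rw [Ideal.map_span, ← Set.range_comp] at this
    exact this
  · simp

theorem bound_T (x : Fin n → S)
    (hsurj : Function.Surjective (aeval x : MvPolynomial (Fin n) k →ₐ[k] S))
    (i₁ i₂ : S →ₐ[k] T) (f : MvPolynomial (Fin n) k) (a b r N ℓ : ℕ) (hr : r < a + b)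
    (h1 : ∀ w : Fin n →₀ ℕ, w.degree < a → i₁ ((taylorHom k x f).coeff w) = 0)
    (h2 : ∀ w : Fin n →₀ ℕ, w.degree < b → i₂ ((taylorHom k x f).coeff w) = 0)
    (hf : homogeneousComponent r f ≠ 0)
    (hN1 : (Ideal.span (Set.range x) ^ N).map i₁ = ⊥)
    (hN2 : (Ideal.span (Set.range x) ^ N).map i₂ = ⊥)
    (hl : ∀ m ∈ Ideal.span (Set.range x) ^ ℓ, ∃ α β, m = α + β ∧ i₁ α = 0 ∧ i₂ β = 0)
    (hT : ∀ t, ∃ γ, t - i₁ γ ∈ Ideal.span (Set.range fun i => i₂ (x i) - i₁ (x i))) :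
    Module.finrank k T ≤ ℓ ^ n * (n * ((r * ℓ) * (2 * N) ^ (n - 1))) := by
  set u : Fin n → T := fun i => i₂ (x i) - i₁ (x i) with hu
  set U := Ideal.span (Set.range u) with hU
  set Y := Ideal.span (Set.range fun i => i₁ (x i)) with hY
  set Z := Ideal.span (Set.range fun i => i₂ (x i)) with hZ
  have hYm : (Ideal.span (Set.range x)).map i₁ = Y := by
    rw [Ideal.map_span, ← Set.range_comp]; rfl
  have hZm : (Ideal.span (Set.range x)).map i₂ = Z := by
    rw [Ideal.map_span, ← Set.range_comp]; rfl
  rw [Ideal.map_pow, hYm] at hN1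
  rw [Ideal.map_pow, hZm] at hN2
  have hYl : Y ^ ℓ ≤ U := by
    rw [← hYm, ← Ideal.map_pow, Ideal.map_le_iff_le_comap]
    intro m hm
    obtain ⟨α, β, rfl, hα, hβ⟩ := hl m hm
    have := diff_mem x hsurj i₁ i₂ β
    rw [hβ, zero_sub, neg_mem_iff] at this
    rw [Ideal.mem_comap, map_add, hα, zero_add]
    exact this
  have hUN : U ^ (2 * N) = ⊥ := by
    have hle : U ≤ Y ⊔ Z := by
      rw [hU, Ideal.span_le]
      rintro _ ⟨i, rfl⟩
      exact sub_mem (Ideal.mem_sup_right (Ideal.subset_span ⟨i, rfl⟩))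
        (Ideal.mem_sup_left (Ideal.subset_span ⟨i, rfl⟩))
    rw [two_mul, eq_bot_iff]
    refine (Ideal.pow_right_mono hle _).trans (Ideal.sup_pow_add_le_pow_sup_pow.trans ?_)
    rw [hN1, hN2, sup_bot_eq]
  have h_start := initial_mem x i₁ i₂ f a b r hr h1 h2 u (fun _ => rfl)
  have hgU : aeval u (homogeneousComponent r f ^ ℓ) ∈ U ^ (r * ℓ + 1) := by
    rw [map_pow]
    have := Ideal.pow_mem_pow h_start ℓ
    rw [mul_comm _ (_ ^ r), pow_succ, ← Ideal.mul_sup, mul_pow, ← pow_mul] at this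
    rw [pow_succ]
    refine Ideal.mul_mono_right ?_ this
    rw [sup_comm]
    exact (sup_pow_le_sup_pow _ _ _).trans (sup_le le_rfl hYl)
  have := (count (k := k) (L := 2 * N) (D := r * ℓ) u
    (fun w : Fin n → Fin ℓ => ∏ i, i₁ (x i) ^ (w i : ℕ)) (by
      intro t
      obtain ⟨γ, hγ⟩ := hT t
      obtain ⟨G, rfl⟩ := hsurj γ
      obtain ⟨v, hv, hv'⟩ := std_span (k := k) (ℓ := ℓ) (fun i => i₁ (x i)) U (fun i =>
        hYl (Ideal.pow_mem_pow (Ideal.subset_span (Set.mem_range_self i)) ℓ)) G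
      refine ⟨v, hv, ?_⟩
      have e : i₁ (aeval x G) = aeval (fun i => i₁ (x i)) G := by
        rw [← AlgHom.comp_apply, comp_aeval]
      rw [e] at hγ
      have := add_mem hγ hv'
      rwa [sub_add_sub_cancel] at this) hUN _
      ((homogeneousComponent_isHomogeneous r f).pow ℓ) (pow_ne_zero _ hf) hgU).2
  simpa using this

theorem finite_quot (x : Fin n → S)
    (hsurj : Function.Surjective (aeval x : MvPolynomial (Fin n) k →ₐ[k] S))
    (J : Ideal S) (N : ℕ) (hN : Ideal.span (Set.range x) ^ N ≤ J) : Module.Finite k (S ⧸ J) := by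
  refine ⟨⟨(Set.finite_range (fun w : Fin n → Fin N =>
    ∏ i, (Ideal.Quotient.mkₐ k J (x i)) ^ (w i : ℕ))).toFinset, ?_⟩⟩
  rw [Set.Finite.coe_toFinset, eq_top_iff]
  rintro t -
  obtain ⟨t, rfl⟩ := Ideal.Quotient.mkₐ_surjective k J t
  obtain ⟨G, rfl⟩ := hsurj t
  obtain ⟨v, hv, hv'⟩ := std_span (k := k) (ℓ := N) (fun i => Ideal.Quotient.mkₐ k J (x i)) ⊥
    (fun i => by
      rw [Ideal.mem_bot, ← map_pow, Ideal.Quotient.mkₐ_eq_mk, Ideal.Quotient.eq_zero_iff_mem]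
      exact hN (Ideal.pow_mem_pow (Ideal.subset_span (Set.mem_range_self i)) N)) G
  rw [Ideal.mem_bot, sub_eq_zero] at hv'
  rw [← AlgHom.comp_apply, comp_aeval, hv']
  exact hv

open TensorProduct in
theorem bound (x : Fin n → S)
    (hsurj : Function.Surjective (aeval x : MvPolynomial (Fin n) k →ₐ[k] S))
    (J₁ J₂ : Ideal S) (f : MvPolynomial (Fin n) k) (a b r N ℓ : ℕ) (hr : r < a + b)
    (h1 : ∀ w : Fin n →₀ ℕ, w.degree < a → (taylorHom k x f).coeff w ∈ J₁)
    (h2 : ∀ w : Fin n →₀ ℕ, w.degree < b → (taylorHom k x f).coeff w ∈ J₂)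
    (hf : homogeneousComponent r f ≠ 0)
    (hN1 : Ideal.span (Set.range x) ^ N ≤ J₁) (hN2 : Ideal.span (Set.range x) ^ N ≤ J₂)
    (hl : Ideal.span (Set.range x) ^ ℓ ≤ J₁ ⊔ J₂) :
    Module.finrank k (S ⧸ J₁) * Module.finrank k (S ⧸ J₂) ≤
      ℓ ^ n * (n * ((r * ℓ) * (2 * N) ^ (n - 1))) := by
  rw [← Module.finrank_tensorProduct]
  set i₁ : S →ₐ[k] (S ⧸ J₁) ⊗[k] (S ⧸ J₂) :=
    (Algebra.TensorProduct.includeLeft (S := k)).comp (Ideal.Quotient.mkₐ k J₁) with hi₁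
  set i₂ : S →ₐ[k] (S ⧸ J₁) ⊗[k] (S ⧸ J₂) :=
    (Algebra.TensorProduct.includeRight).comp (Ideal.Quotient.mkₐ k J₂) with hi₂
  have z1 : ∀ s ∈ J₁, i₁ s = 0 := by
    intro s hs
    simp [hi₁, Ideal.Quotient.eq_zero_iff_mem.mpr hs]
  have z2 : ∀ s ∈ J₂, i₂ s = 0 := by
    intro s hs
    simp [hi₂, Ideal.Quotient.eq_zero_iff_mem.mpr hs]
  refine bound_T x hsurj i₁ i₂ f a b r N ℓ hr (fun w hw => z1 _ (h1 w hw))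
    (fun w hw => z2 _ (h2 w hw)) hf ?_ ?_ ?_ ?_
  · rw [eq_bot_iff, Ideal.map_le_iff_le_comap]
    exact fun s hs => z1 s (hN1 hs)
  · rw [eq_bot_iff, Ideal.map_le_iff_le_comap]
    exact fun s hs => z2 s (hN2 hs)
  · intro m hm
    obtain ⟨α, hα, β, hβ, rfl⟩ := Submodule.mem_sup.mp (hl hm)
    exact ⟨α, β, rfl, z1 _ hα, z2 _ hβ⟩
  · intro t
    induction t using TensorProduct.induction_on with
    | zero => exact ⟨0, by simp⟩
    | add t t' h h' =>
      obtain ⟨γ, hγ⟩ := h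
      obtain ⟨γ', hγ'⟩ := h'
      refine ⟨γ + γ', ?_⟩
      rw [map_add, add_sub_add_comm]
      exact add_mem hγ hγ'
    | tmul α β =>
      obtain ⟨α, rfl⟩ := Ideal.Quotient.mkₐ_surjective k J₁ α
      obtain ⟨β, rfl⟩ := Ideal.Quotient.mkₐ_surjective k J₂ β
      refine ⟨α * β, ?_⟩
      have e : (Ideal.Quotient.mkₐ k J₁ α) ⊗ₜ[k] (Ideal.Quotient.mkₐ k J₂ β) = i₁ α * i₂ β := by
        simp [hi₁, hi₂]
      rw [e, map_mul, ← mul_sub]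
      exact Ideal.mul_mem_left _ _ (diff_mem x hsurj i₁ i₂ β)
end
end SymPow

namespace SymPow
open MvPolynomial IsLocalRing

theorem exists_mul_mem_of_mem_symbolicPower {R : Type*} [CommRing R] (p : Ideal R) [p.IsPrime]
    (a : ℕ) (f : R) (hf : f ∈ symbolicPower p a) : ∃ s ∉ p, s * f ∈ p ^ a := by
  rw [symbolicPower, Ideal.mem_comap,
    IsLocalization.algebraMap_mem_map_algebraMap_iff p.primeCompl] at hf
  obtain ⟨s, hs, h⟩ := hf
  exact ⟨s, hs, h⟩

theorem choose_le_finrank {R : Type*} [CommRing R] [IsLocalRing R] {M N : ℕ} (hNM : N ≤ M)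
    (p : Ideal R) [Algebra (ResidueField R) (R ⧸ maximalIdeal R ^ M)]
    (c : ℕ) (hc : (c : ℕ∞) ≤ Module.length R (R ⧸ (p ⊔ maximalIdeal R ^ N)))
    [Module.Finite (ResidueField R) ((R ⧸ maximalIdeal R ^ M) ⧸
      (p ⊔ maximalIdeal R ^ N).map (Ideal.Quotient.mk (maximalIdeal R ^ M)))] :
    c ≤ Module.finrank (ResidueField R) ((R ⧸ maximalIdeal R ^ M) ⧸
      (p ⊔ maximalIdeal R ^ N).map (Ideal.Quotient.mk (maximalIdeal R ^ M))) := by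
  have hle : maximalIdeal R ^ M ≤ p ⊔ maximalIdeal R ^ N :=
    le_sup_of_le_right (Ideal.pow_le_pow_right hNM)
  have e := (DoubleQuot.quotQuotEquivQuotOfLEₐ R hle).toLinearEquiv.length_eq
  have h := length_le_finrank (R := R) (k := ResidueField R) (Q := (R ⧸ maximalIdeal R ^ M) ⧸
      (p ⊔ maximalIdeal R ^ N).map (Ideal.Quotient.mk (maximalIdeal R ^ M)))
      (Ideal.Quotient.mk_surjective.comp Ideal.Quotient.mk_surjective)
  rw [← Nat.cast_le (α := ℕ∞)]
  refine hc.trans (le_trans ?_ h)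
  exact e.symm.le

theorem exists_nat_dim {R : Type*} [CommRing R] [IsNoetherianRing R] [IsLocalRing R] (p : Ideal R)
    [p.IsPrime] : ∃ d : ℕ, ringKrullDim (R ⧸ p) = d := by
  have : IsLocalRing (R ⧸ p) := IsLocalRing.of_surjective' _ Ideal.Quotient.mk_surjective
  have h1 : ringKrullDim (R ⧸ p) ≠ ⊤ := ringKrullDim_ne_top
  have h2 : ringKrullDim (R ⧸ p) ≠ ⊥ := ringKrullDim_ne_bot
  lift ringKrullDim (R ⧸ p) to ℕ∞ using h2 with e
  lift e to ℕ using (by rintro rfl; exact h1 rfl)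
  exact ⟨e, rfl⟩

theorem main {K R : Type*} [Field K]
    [CommRing R] [IsLocalRing R] [Algebra K R] (hreg : IsRegularLocal R)
    (p q : Ideal R) [p.IsPrime] [q.IsPrime]
    (hrad : (p ⊔ q).radical = IsLocalRing.maximalIdeal R)
    (hdim : ringKrullDim (R ⧸ p) + ringKrullDim (R ⧸ q) = ringKrullDim R)
    (a b : ℕ) :
    symbolicPower p a ⊓ symbolicPower q b ≤ IsLocalRing.maximalIdeal R ^ (a + b) := by
  obtain ⟨hnoeth, S, hS, hcard⟩ := hreg
  set n := S.card with hn
  set x : Fin n → R := fun i => (S.equivFin.symm i : R) with hxdef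
  have hx : Ideal.span (Set.range x) = maximalIdeal R := by
    rw [← hS]
    congr 1
    ext t
    constructor
    · rintro ⟨i, rfl⟩; exact (S.equivFin.symm i).2
    · intro ht; exact ⟨S.equivFin ⟨t, ht⟩, by simp [hxdef]⟩
  have hdimR : ringKrullDim R = n := hcard.symm
  obtain ⟨d₁, hd₁⟩ := exists_nat_dim p
  obtain ⟨d₂, hd₂⟩ := exists_nat_dim q
  have hdd : d₁ + d₂ = n := by
    rw [hd₁, hd₂, hdimR] at hdim
    exact_mod_cast hdim
  obtain ⟨ℓ, hℓ⟩ : ∃ ℓ, maximalIdeal R ^ ℓ ≤ p ⊔ q := by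
    rw [← hrad]
    exact Ideal.exists_radical_pow_le_of_fg _ (IsNoetherian.noetherian _)
  rintro f ⟨hfp, hfq⟩
  by_contra hfm
  obtain ⟨s₁, hs₁, hsf₁⟩ := exists_mul_mem_of_mem_symbolicPower p a f hfp
  obtain ⟨s₂, hs₂, hsf₂⟩ := exists_mul_mem_of_mem_symbolicPower q b f hfq
  obtain ⟨c₁, hc₁⟩ := taylor_symbolic (K := K) x hx hdimR p s₁ hs₁ a f hsf₁
  obtain ⟨c₂, hc₂⟩ := taylor_symbolic (K := K) x hx hdimR q s₂ hs₂ b f hsf₂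
  obtain ⟨C₁, hC₁⟩ := length_lower' p d₁ hd₁.ge
  obtain ⟨C₂, hC₂⟩ := length_lower' q d₂ hd₂.ge
  have hmono : ∀ (I : Ideal R) (i j : ℕ), i ≤ j →
      Module.length R (R ⧸ (I ⊔ maximalIdeal R ^ i)) ≤
        Module.length R (R ⧸ (I ⊔ maximalIdeal R ^ j)) := by
    intro I i j hij
    have h : I ⊔ maximalIdeal R ^ j ≤ I ⊔ maximalIdeal R ^ i :=
      sup_le_sup_left (Ideal.pow_le_pow_right hij) _
    exact Module.length_le_of_surjective (Submodule.factor h) (Submodule.factor_surjective h)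
  refine asym d₁ d₂ n (ℓ ^ n * ((a + b) * ℓ)) (2 * (C₁ + C₂)) 2 hdd fun t => ?_
  set N := (C₁ + C₂) * t + 1 with hN
  have hN1 : C₁ * t + 1 ≤ N := by rw [hN, Nat.add_mul]; omega
  have hN2 : C₂ * t + 1 ≤ N := by rw [hN, Nat.add_mul]; omega
  set M := N + (a + a * c₁) + (b + b * c₂) with hM
  have hMN : N ≤ M := by omega
  obtain ⟨σ, hσ⟩ := (coeff_fields (K := K) (R := R)).1 M (by omega)
  have key₁ := hc₁ N M (by omega) (by omega) σ hσ
  have key₂ := hc₂ N M (by omega) (by omega) σ hσ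
  let _ : Algebra (ResidueField R) (R ⧸ maximalIdeal R ^ M) := σ.toAlgebra
  set π := Ideal.Quotient.mk (maximalIdeal R ^ M) with hπ
  set x' : Fin n → R ⧸ maximalIdeal R ^ M := fun i => π (x i) with hx'
  have hspan : Ideal.span (Set.range x') = (maximalIdeal R).map π := by
    have h := congrArg (Ideal.map π) hx
    rw [← h, Ideal.map_span, ← Set.range_comp]
    rfl
  have hsurj : Function.Surjective
      (aeval x' : MvPolynomial (Fin n) (ResidueField R) →ₐ[ResidueField R] _) :=
    evalCoeff_surjective x hx σ hσ
  obtain ⟨F, hF⟩ := hsurj (π f)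
  have hFv : F ∉ idealOfVars (Fin n) (ResidueField R) ^ (a + b) := by
    intro hFv
    have h1 := Ideal.mem_map_of_mem (aeval x' : _ →ₐ[ResidueField R] _) hFv
    have h2 : (idealOfVars (Fin n) (ResidueField R)).map (aeval x' : _ →ₐ[ResidueField R] _) =
        Ideal.span (Set.range x') := by
      rw [idealOfVars, Ideal.map_span]
      congr 1
      ext; simp
    rw [Ideal.map_pow, h2, hspan, ← Ideal.map_pow, hF] at h1
    have h3 := Ideal.mem_comap.mpr h1
    rw [Ideal.comap_map_of_surjective _ Ideal.Quotient.mk_surjective, ← RingHom.ker_eq_comap_bot,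
        Ideal.mk_ker, sup_eq_left.mpr (Ideal.pow_le_pow_right (by omega))] at h3
    exact hfm h3
  rw [mem_pow_idealOfVars_iff'] at hFv
  push Not at hFv
  obtain ⟨w₀, hw₀, hw₀'⟩ := hFv
  have hne : homogeneousComponent w₀.degree F ≠ 0 := by
    intro h
    have := congrArg (coeff w₀) h
    rw [coeff_homogeneousComponent, if_pos rfl] at this
    exact hw₀' (by simpa using this)
  have hle1 : Ideal.span (Set.range x') ^ N ≤ (p ⊔ maximalIdeal R ^ N).map π := by
    rw [hspan, ← Ideal.map_pow]; exact Ideal.map_mono le_sup_right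
  have hle2 : Ideal.span (Set.range x') ^ N ≤ (q ⊔ maximalIdeal R ^ N).map π := by
    rw [hspan, ← Ideal.map_pow]; exact Ideal.map_mono le_sup_right
  have hb := bound x' hsurj ((p ⊔ maximalIdeal R ^ N).map π) ((q ⊔ maximalIdeal R ^ N).map π)
    F a b w₀.degree N ℓ hw₀ (key₁ F hF) (key₂ F hF) hne hle1 hle2 (by
      rw [hspan, ← Ideal.map_pow, ← Ideal.map_sup]
      exact Ideal.map_mono (hℓ.trans (sup_le_sup le_sup_left le_sup_left)))
  have fin1 := finite_quot x' hsurj _ N hle1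
  have fin2 := finite_quot x' hsurj _ N hle2
  have l1 := choose_le_finrank hMN p _ ((hC₁ t).trans (hmono p _ _ hN1))
  have l2 := choose_le_finrank hMN q _ ((hC₂ t).trans (hmono q _ _ hN2))
  calc t.choose d₁ * t.choose d₂ ≤ _ := Nat.mul_le_mul l1 l2
    _ ≤ _ := hb
    _ ≤ ℓ ^ n * (n * (((a + b) * ℓ) * (2 * N) ^ (n - 1))) := by gcongr
    _ = _ := by
      have : 2 * N = 2 * (C₁ + C₂) * t + 2 := by rw [hN]; ring
      rw [this]; ring
end SymPow

/-- **Sather-Wagstaff**: let `(R, 𝔪)` be a regular local ring containing a field, and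
`𝔭, 𝔮` primes with `√(𝔭 + 𝔮) = 𝔪` and `dim R/𝔭 + dim R/𝔮 = dim R`. Then for all
positive integers `a`, `b` one has `𝔭^{(a)} ∩ 𝔮^{(b)} ⊆ 𝔪^{a+b}`. -/
theorem symbolicPower_inf_symbolicPower_le_pow_maximalIdeal {K R : Type*} [Field K]
    [CommRing R] [IsLocalRing R] [Algebra K R] (hreg : IsRegularLocal R)
    (p q : Ideal R) [p.IsPrime] [q.IsPrime]
    (hrad : (p ⊔ q).radical = IsLocalRing.maximalIdeal R)
    (hdim : ringKrullDim (R ⧸ p) + ringKrullDim (R ⧸ q) = ringKrullDim R)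
    (a b : ℕ) (ha : 0 < a) (hb : 0 < b) :
    symbolicPower p a ⊓ symbolicPower q b ≤ IsLocalRing.maximalIdeal R ^ (a + b) := by
  exact SymPow.main (K := K) hreg p q hrad hdim a b
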